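/- arXiv:2208.01962 — 2 statements merged into one kernel-verified Lean document; each statement's English description precedes it below -/
import Mathlib

section
/- Let L be an even unimodular nondegenerate lattice and S an even nondegenerate lattice such that ℓ(S) > rk(L) − rk(S). Then there exists no primitive embedding of S into L, i.e., no injective ℤ-linear map S → L preserving the bilinear forms whose cokernel is torsion-free. -/
noncomputable section
open Matrix

namespace K3Paper

/-! ### Generic lattice machinery over ℚ-ambient spaces -/

abbrev Amb (n : ℕ) := Fin n → ℚ

/-- bilinear form attached to a Gram matrix -/
def bq {n : ℕ} (G : Matrix (Fin n) (Fin n) ℚ) (x y : Amb n) : ℚ := x ⬝ᵥ (G *ᵥ y)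

/-- the form, as a ℤ-linear map in the first variable (second variable fixed) -/
def bqL {n : ℕ} (G : Matrix (Fin n) (Fin n) ℚ) (y : Amb n) : Amb n →ₗ[ℤ] ℚ where
  toFun x := bq G x y
  map_add' x x' := by simp [bq, add_dotProduct]
  map_smul' k x := by
    show (k • x) ⬝ᵥ (G *ᵥ y) = k • (x ⬝ᵥ (G *ᵥ y))
    exact smul_dotProduct k x (G *ᵥ y)

/-- the image of ℤ inside ℚ, as a ℤ-submodule -/
def intQ : Submodule ℤ ℚ := LinearMap.range (Algebra.linearMap ℤ ℚ)

/-- the dual lattice of the ℤ-span of `T` (inside the ℚ-span of `T`) -/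
def dualLat {n : ℕ} (G : Matrix (Fin n) (Fin n) ℚ) (T : Set (Amb n)) : Submodule ℤ (Amb n) :=
  (Submodule.span ℚ T).restrictScalars ℤ ⊓ ⨅ y ∈ T, Submodule.comap (bqL G y) intQ

/-- the discriminant group `A_S = S^*/S` of the ℤ-span of `T` -/
abbrev disc {n : ℕ} (G : Matrix (Fin n) (Fin n) ℚ) (T : Set (Amb n)) :=
  ↥(dualLat G T) ⧸ (Submodule.span ℤ T).comap (dualLat G T).subtype

/-- class of a dual vector in the discriminant group -/
def discMk {n : ℕ} (G : Matrix (Fin n) (Fin n) ℚ) (T : Set (Amb n))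
    (x : ↥(dualLat G T)) : disc G T := Submodule.Quotient.mk x

/-- the orthogonal complement of `T` inside the lattice `A` -/
def orthoIn {n : ℕ} (G : Matrix (Fin n) (Fin n) ℚ) (A : Submodule ℤ (Amb n))
    (T : Set (Amb n)) : Submodule ℤ (Amb n) :=
  A ⊓ ⨅ y ∈ T, LinearMap.ker (bqL G y)

def IsIntegral {n : ℕ} (G : Matrix (Fin n) (Fin n) ℚ) (A : Set (Amb n)) : Prop :=
  ∀ x ∈ A, ∀ y ∈ A, ∃ k : ℤ, bq G x y = k

def IsEven {n : ℕ} (G : Matrix (Fin n) (Fin n) ℚ) (A : Set (Amb n)) : Prop :=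
  ∀ x ∈ A, ∃ k : ℤ, bq G x x = 2 * k

def NegDef {n : ℕ} (G : Matrix (Fin n) (Fin n) ℚ) (A : Set (Amb n)) : Prop :=
  ∀ x ∈ A, x ≠ 0 → bq G x x < 0

/-- the quotient group `B/A` of a pair of lattices -/
abbrev quotBy {n : ℕ} (A B : Submodule ℤ (Amb n)) := ↥B ⧸ Submodule.comap B.subtype A

/-- the index of `A` in `B` -/
def subIndex {n : ℕ} (A B : Submodule ℤ (Amb n)) : ℕ := Nat.card (quotBy A B)

/-- `A` is a primitive sublattice of `Q` (the quotient is torsion-free) -/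
def PrimIn {n : ℕ} (A Q : Submodule ℤ (Amb n)) : Prop :=
  ∀ x ∈ Q, ∀ k : ℤ, k ≠ 0 → k • x ∈ A → x ∈ A

/-- isometry between two lattices, possibly in different ambient spaces -/
def LatIsom {n₁ n₂ : ℕ} (G₁ : Matrix (Fin n₁) (Fin n₁) ℚ) (S₁ : Submodule ℤ (Amb n₁))
    (G₂ : Matrix (Fin n₂) (Fin n₂) ℚ) (S₂ : Submodule ℤ (Amb n₂)) : Prop :=
  ∃ φ : ↥S₁ ≃ₗ[ℤ] ↥S₂, ∀ x y : ↥S₁, bq G₁ ↑x ↑y = bq G₂ ↑(φ x) ↑(φ y)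

/-! integral-coordinate lattices -/

/-- bilinear form of an integral Gram matrix on `ℤ^n` -/
def bz {n : ℕ} (H : Matrix (Fin n) (Fin n) ℤ) (x y : Fin n → ℤ) : ℤ := x ⬝ᵥ (H *ᵥ y)

/-- isometry from a ℚ-ambient lattice onto all of `ℤ^m` with Gram matrix `H` -/
def LatIsomToZ {n m : ℕ} (G : Matrix (Fin n) (Fin n) ℚ) (S : Submodule ℤ (Amb n))
    (H : Matrix (Fin m) (Fin m) ℤ) : Prop :=
  ∃ φ : ↥S ≃ₗ[ℤ] (Fin m → ℤ), ∀ x y : ↥S, bq G ↑x ↑y = ((bz H (φ x) (φ y) : ℤ) : ℚ)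

/-- `φ` is a primitive, form-preserving embedding of the lattice `S` into `ℤ^m`
with Gram matrix `H` -/
def IsPrimEmb {n m : ℕ} (G : Matrix (Fin n) (Fin n) ℚ) (S : Submodule ℤ (Amb n))
    (H : Matrix (Fin m) (Fin m) ℤ) (φ : ↥S →ₗ[ℤ] (Fin m → ℤ)) : Prop :=
  Function.Injective φ ∧ (∀ x y : ↥S, bq G ↑x ↑y = ((bz H (φ x) (φ y) : ℤ) : ℚ)) ∧
    ∀ (v : Fin m → ℤ) (k : ℤ), k ≠ 0 → k • v ∈ LinearMap.range φ → v ∈ LinearMap.range φ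

/-- isometry of `ℤ^m` with Gram matrix `H` -/
def IsIsomZ {m : ℕ} (H : Matrix (Fin m) (Fin m) ℤ) (θ : (Fin m → ℤ) ≃ₗ[ℤ] (Fin m → ℤ)) : Prop :=
  ∀ x y, bz H (θ x) (θ y) = bz H x y

/-- the standard lattice `ℤ^n ⊆ ℚ^n` -/
def stdLat (n : ℕ) : Submodule ℤ (Amb n) :=
  Submodule.span ℤ (Set.range fun i => (Pi.single i 1 : Amb n))

/-- minimal number of generators of the discriminant group -/
def latLen {n : ℕ} (G : Matrix (Fin n) (Fin n) ℚ) (T : Set (Amb n)) : ℕ :=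
  sInf {k | ∃ f : Fin k → disc G T, Submodule.span ℤ (Set.range f) = ⊤}

/-- extending the ambient space by one coordinate of square `c`, orthogonal to the rest -/
def extGram {n : ℕ} (G : Matrix (Fin n) (Fin n) ℚ) (c : ℚ) :
    Matrix (Fin (n+1)) (Fin (n+1)) ℚ :=
  Matrix.of fun i j =>
    if hi : (i : ℕ) < n then
      if hj : (j : ℕ) < n then G ⟨i, hi⟩ ⟨j, hj⟩ else 0
    else if (j : ℕ) < n then 0 else c

/-- extending a vector by a zero coordinate -/
def extV {n : ℕ} (x : Amb n) : Amb (n+1) :=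
  fun k => if h : (k : ℕ) < n then x ⟨k, h⟩ else 0

/-- the added last basis vector -/
def lastV (n : ℕ) : Amb (n+1) := Pi.single (Fin.last n) 1



/-! ### The lattice `W` and the K3 lattice `Λ` -/

/-- entries of the Gram matrix of `W = D4⁴ ⊕ A1² ⊕ ⟨-4⟩ ⊕ ⟨4⟩ ⊕ ⟨2⟩ ⊕ ⟨2⟩` -/
def gramWent (i j : ℕ) : ℚ :=
  if i < 16 ∧ j < 16 then
    if i / 4 = j / 4 then
      if i = j then -2 else if i % 4 = 2 ∨ j % 4 = 2 then 1 else 0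
    else 0
  else if i = j then
    if i < 18 then -2 else if i = 18 then -4 else if i = 19 then 4 else 2
  else 0

def gramW : Matrix (Fin 22) (Fin 22) ℚ := Matrix.of fun i j => gramWent i j

/-- standard basis vectors of the 22-dimensional ambient space -/
def sb (i : Fin 22) : Amb 22 := Pi.single i 1

def eW (i : Fin 4) : Amb 22 := sb ⟨i.1, by have := i.isLt; omega⟩
def fW (i : Fin 4) : Amb 22 := sb ⟨i.1 + 4, by have := i.isLt; omega⟩
def gW (i : Fin 4) : Amb 22 := sb ⟨i.1 + 8, by have := i.isLt; omega⟩
def hW (i : Fin 4) : Amb 22 := sb ⟨i.1 + 12, by have := i.isLt; omega⟩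
def a1V : Amb 22 := sb 16
def a2V : Amb 22 := sb 17
def sgV : Amb 22 := sb 18
def rhV : Amb 22 := sb 19
def om1V : Amb 22 := sb 20
def om2V : Amb 22 := sb 21

def chiV : Amb 22 := (2:ℚ)⁻¹ • (rhV + sgV)
def alV : Amb 22 := (4:ℚ)⁻¹ • (rhV + sgV) + (2:ℚ)⁻¹ • (eW 0 + eW 1 + fW 0 + fW 3)
def beV : Amb 22 := (4:ℚ)⁻¹ • (rhV - sgV) + (2:ℚ)⁻¹ • (fW 0 + fW 1 + gW 0 + gW 3)
def gaV : Amb 22 := (4:ℚ)⁻¹ • (rhV + sgV) + (2:ℚ)⁻¹ • (gW 0 + gW 1 + hW 0 + hW 3)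
def deV : Amb 22 := (4:ℚ)⁻¹ • (rhV - sgV) + (2:ℚ)⁻¹ • (hW 0 + hW 1 + eW 0 + eW 3)
def epV : Amb 22 := (2:ℚ)⁻¹ • (rhV + fW 1 + fW 3 + hW 1 + hW 3 + a1V + a2V)
def zeV : Amb 22 := (2:ℚ)⁻¹ • (eW 0 + fW 0 + eW 3 + fW 1 + a1V + om1V)
def etV : Amb 22 := (2:ℚ)⁻¹ • (eW 0 + fW 0 + eW 3 + fW 1 + a2V + om2V)

/-- the K3 lattice `Λ`, as an overlattice of `W` -/
def Lam : Submodule ℤ (Amb 22) :=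
  Submodule.span ℤ (Set.range sb ∪ {chiV, alV, beV, gaV, deV, epV, zeV, etV})

/-! ### The order-4 isometry `τ` -/

def tauEnt (k j : ℕ) : ℚ :=
  if k < 4 then (if j = k + 12 then 1 else 0)
  else if k < 16 then (if j = k - 4 then 1 else 0)
  else if k = 16 then (if j = 17 then 1 else 0)
  else if k = 17 then (if j = 16 then 1 else 0)
  else if k = 18 then (if j = 18 then -1 else 0)
  else (if j = k then 1 else 0)

def tauMat : Matrix (Fin 22) (Fin 22) ℚ := Matrix.of fun k j => tauEnt k j

/-- the isometry `τ` (as a linear endomorphism of the ambient space) -/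
def tauL : Amb 22 →ₗ[ℚ] Amb 22 := tauMat.mulVecLin

/-- the invariant lattice `Λ^τ` -/
def FixTau : Submodule ℤ (Amb 22) :=
  Lam ⊓ (LinearMap.ker (tauL - LinearMap.id)).restrictScalars ℤ

/-- the invariant lattice `Λ^{τ²}` -/
def FixTau2 : Submodule ℤ (Amb 22) :=
  Lam ⊓ (LinearMap.ker (tauL ∘ₗ tauL - LinearMap.id)).restrictScalars ℤ

/-- the coinvariant lattice `Ω₄ = (Λ^τ)^⊥ ∩ Λ` -/
def Om4 : Submodule ℤ (Amb 22) := orthoIn gramW Lam ↑FixTau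

/-- `Ω₂`, spanned by the listed eight elements -/
def Om2 : Submodule ℤ (Amb 22) :=
  Submodule.span ℤ {alV - gaV, beV - deV, eW 0 - gW 0, eW 2 - gW 2,
    fW 0 - hW 0, fW 1 - hW 1, fW 2 - hW 2, fW 3 - hW 3}

/-- `R`, the orthogonal complement of `Ω₂` in `Ω₄` -/
def Rlat : Submodule ℤ (Amb 22) := orthoIn gramW Om4 ↑Om2

/-! ### The K3 lattice in its standard integral form -/

/-- negative definite `E8` Gram matrix entries (Bourbaki numbering of the Dynkin diagram) -/
def e8ent (i j : ℕ) : ℤ :=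
  if i = j then -2
  else if (i, j) ∈ ([(0,2),(2,0),(1,3),(3,1),(2,3),(3,2),(3,4),(4,3),
      (4,5),(5,4),(5,6),(6,5),(6,7),(7,6)] : List (ℕ × ℕ)) then 1
  else 0

def e8mat : Matrix (Fin 8) (Fin 8) ℤ := Matrix.of fun i j => e8ent i.1 j.1

/-- Gram matrix of `Λ_K3 = E8² ⊕ U³` -/
def k3ent (i j : ℕ) : ℤ :=
  if i < 8 ∧ j < 8 then e8ent i j
  else if 8 ≤ i ∧ i < 16 ∧ 8 ≤ j ∧ j < 16 then e8ent (i - 8) (j - 8)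
  else if 16 ≤ i ∧ i < 22 ∧ 16 ≤ j ∧ j < 22 ∧ (i - 16) / 2 = (j - 16) / 2 then
    (if i = j then 0 else 1)
  else 0

def gramK3 : Matrix (Fin 22) (Fin 22) ℤ := Matrix.of fun i j => k3ent i.1 j.1

/-! ### The exceptional lattice `M` -/

/-- Gram matrix of `A3⁴ ⊕ A1²` -/
def gramMent (i j : ℕ) : ℚ :=
  if i < 12 ∧ j < 12 ∧ i / 3 = j / 3 then
    (if i = j then -2 else if i + 1 = j ∨ j + 1 = i then 1 else 0)
  else if i = j then -2 else 0

def gramM : Matrix (Fin 14) (Fin 14) ℚ := Matrix.of fun i j => gramMent i.1 j.1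

def mb (i : Fin 14) : Amb 14 := Pi.single i 1

/-- the glue vector `μ` -/
def muM : Amb 14 :=
  (4:ℚ)⁻¹ • ((mb 0 + (2:ℚ) • mb 1 + (3:ℚ) • mb 2) + (mb 3 + (2:ℚ) • mb 4 + (3:ℚ) • mb 5)
    + (mb 6 + (2:ℚ) • mb 7 + (3:ℚ) • mb 8) + (mb 9 + (2:ℚ) • mb 10 + (3:ℚ) • mb 11))
  + (2:ℚ)⁻¹ • (mb 12 + mb 13)

/-- the exceptional lattice `M = M_{ℤ/4ℤ}` -/
def Mlat : Submodule ℤ (Amb 14) := Submodule.span ℤ (Set.range mb ∪ {muM})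

/-! ### The Nikulin lattice `N` -/

def gramN8 : Matrix (Fin 8) (Fin 8) ℚ := Matrix.diagonal fun _ => -2

def nb (i : Fin 8) : Amb 8 := Pi.single i 1

def nuN : Amb 8 := (2:ℚ)⁻¹ • (∑ i : Fin 8, nb i)

/-- the Nikulin lattice -/
def Nlat : Submodule ℤ (Amb 8) := Submodule.span ℤ (Set.range nb ∪ {nuN})

/-! ### The ambient space for `Γ`: `Ŵ ⊕ A1⁸` (coordinates 0–13 for `Ŵ`, 14–21 Nikulin) -/

def gamEnt (i j : ℕ) : ℚ :=
  if i < 8 ∧ j < 8 then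
    (if i / 4 = j / 4 then (if i = j then -2 else if i % 4 = 2 ∨ j % 4 = 2 then 1 else 0) else 0)
  else if i = j then
    (if i < 10 then -4 else if i = 10 then -8 else if i = 11 then 8
     else if i < 14 then 4 else -2)
  else 0

def gramGam : Matrix (Fin 22) (Fin 22) ℚ := Matrix.of fun i j => gamEnt i.1 j.1

/-- the projection `π : W ⊗ ℚ → Ŵ ⊗ ℚ` (realized inside the `Γ`-ambient space) -/
def piEnt (k j : ℕ) : ℚ :=
  if k < 8 then (if j = k ∨ j = k + 8 then 1 else 0)
  else if k < 14 then (if j = k + 8 then 1 else 0)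
  else 0

def piMat : Matrix (Fin 22) (Fin 22) ℚ := Matrix.of fun k j => piEnt k.1 j.1

def piL : Amb 22 →ₗ[ℚ] Amb 22 := piMat.mulVecLin

/-- `R̂ = π(Ω₄)` -/
def Rhat : Submodule ℤ (Amb 22) := Submodule.map (piL.restrictScalars ℤ) Om4

/-- the Nikulin curves inside the `Γ`-ambient space (coordinates 14,…,21) -/
def nG (i : Fin 8) : Amb 22 := sb ⟨14 + i.1, by have := i.isLt; omega⟩

def nuG : Amb 22 := (2:ℚ)⁻¹ • (∑ i : Fin 8, nG i)

/-- the copy of the Nikulin lattice inside the `Γ`-ambient space -/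
def NlatG : Submodule ℤ (Amb 22) := Submodule.span ℤ (Set.range nG ∪ {nuG})

/-- `x₁ = (n₃+n₄+n₅+n₈+σ̂)/2` -/
def x1G : Amb 22 := (2:ℚ)⁻¹ • (nG 2 + nG 3 + nG 4 + nG 7 + sb 10)

/-- `x₂ = (n₃+n₄+(ê₁−f̂₁)+(ê₄−f̂₄))/2 + (â₁−â₂+σ̂)/4` -/
def x2G : Amb 22 :=
  (2:ℚ)⁻¹ • (nG 2 + nG 3 + (sb 0 - sb 4) + (sb 3 - sb 7)) + (4:ℚ)⁻¹ • (sb 8 - sb 9 + sb 10)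

/-- the lattice `Γ` -/
def GamLat : Submodule ℤ (Amb 22) :=
  Submodule.span ℤ ((Rhat : Set (Amb 22)) ∪ (NlatG : Set (Amb 22)) ∪ {x1G, x2G})


/-! ### further generic notions -/

/-- `Q` is an overlattice of `A ⊕ B` (inside `(A ⊕ B) ⊗ ℚ`) which is an even integral
lattice and in which both `A` and `B` are primitive. -/
def OverCond {n : ℕ} (G : Matrix (Fin n) (Fin n) ℚ) (A B Q : Submodule ℤ (Amb n)) : Prop :=
  A ⊔ B ≤ Q ∧
  Q ≤ (Submodule.span ℚ ((A ⊔ B : Submodule ℤ (Amb n)) : Set (Amb n))).restrictScalars ℤ ∧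
  IsIntegral G ↑Q ∧ IsEven G ↑Q ∧ PrimIn A Q ∧ PrimIn B Q

/-- overlattice with quotient `ℤ/2ℤ` -/
def OvIdx2 {n : ℕ} (G : Matrix (Fin n) (Fin n) ℚ) (A B Q : Submodule ℤ (Amb n)) : Prop :=
  OverCond G A B Q ∧ subIndex (A ⊔ B) Q = 2

/-- overlattice with quotient `ℤ/4ℤ` -/
def OvIdx4 {n : ℕ} (G : Matrix (Fin n) (Fin n) ℚ) (A B Q : Submodule ℤ (Amb n)) : Prop :=
  OverCond G A B Q ∧ subIndex (A ⊔ B) Q = 4 ∧ IsAddCyclic (quotBy (A ⊔ B) Q)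

/-- the lattice `S` admits a primitive embedding into `ℤ^m` with Gram matrix `H`,
and any two such embeddings are conjugate by an isometry of the target. -/
def PrimEmbUnique {n m : ℕ} (G : Matrix (Fin n) (Fin n) ℚ) (S : Submodule ℤ (Amb n))
    (H : Matrix (Fin m) (Fin m) ℤ) : Prop :=
  (∃ φ, IsPrimEmb G S H φ) ∧
    ∀ φ ψ, IsPrimEmb G S H φ → IsPrimEmb G S H ψ →
      ∃ θ : (Fin m → ℤ) ≃ₗ[ℤ] (Fin m → ℤ), IsIsomZ H θ ∧ ∀ x, θ (φ x) = ψ x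

/-- compatibility of a function on the discriminant group with the discriminant
quadratic form (this characterizes the discriminant quadratic form). -/
def qCompat {n : ℕ} (G : Matrix (Fin n) (Fin n) ℚ) (T : Set (Amb n))
    (Qf : disc G T → AddCircle (2:ℚ)) : Prop :=
  ∀ x : ↥(dualLat G T), Qf (discMk G T x) = ((bq G ↑x ↑x : ℚ) : AddCircle (2:ℚ))

/-- two classes of the discriminant group are related by an isometry of the lattice
(an isometry of the ℤ-span of `T` is encoded as an ambient isometry preserving the span
of `T` and fixing its orthogonal complement pointwise). -/
def discRel {n : ℕ} (G : Matrix (Fin n) (Fin n) ℚ) (T : Set (Amb n))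
    (a b : disc G T) : Prop :=
  ∃ φ : Amb n ≃ₗ[ℚ] Amb n,
    (∀ x y, bq G (φ x) (φ y) = bq G x y) ∧
    (φ '' (Submodule.span ℤ T : Set (Amb n)) = (Submodule.span ℤ T : Set (Amb n))) ∧
    (∀ x, (∀ s ∈ T, bq G x s = 0) → φ x = x) ∧
    ∃ u v : ↥(dualLat G T), φ ↑u = (v : Amb n) ∧ a = discMk G T u ∧ b = discMk G T v

/-- two overlattices `Q`, `Q'` of `S ⊕ K` are isomorphic: there is an isometry of
`S ⊕ K` carrying `S` to `S` and `K` to `K` whose ℚ-linear extension carries `Q` to `Q'`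
(encoded as an ambient isometry, which is precisely such an extension). -/
def isoRelQ {n : ℕ} (G : Matrix (Fin n) (Fin n) ℚ) (S K : Submodule ℤ (Amb n))
    (Q Q' : Submodule ℤ (Amb n)) : Prop :=
  ∃ φ : Amb n ≃ₗ[ℚ] Amb n,
    (∀ x y, bq G (φ x) (φ y) = bq G x y) ∧
    φ '' (S : Set (Amb n)) = (S : Set (Amb n)) ∧
    φ '' (K : Set (Amb n)) = (K : Set (Amb n)) ∧
    φ '' (Q : Set (Amb n)) = (Q' : Set (Amb n))

/-- two elements of the dual lattice of `S` are in the same orbit of the discriminant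
group under the action induced by `O(S)`. -/
def orbRelEl {n : ℕ} (G : Matrix (Fin n) (Fin n) ℚ) (S : Submodule ℤ (Amb n))
    (u v : ↥(dualLat G (S : Set (Amb n)))) : Prop :=
  ∃ φ : Amb n ≃ₗ[ℚ] Amb n,
    (∀ x y, bq G (φ x) (φ y) = bq G x y) ∧
    φ '' (S : Set (Amb n)) = (S : Set (Amb n)) ∧
    (∀ x, (∀ s ∈ (S : Set (Amb n)), bq G x s = 0) → φ x = x) ∧
    φ ↑u - ↑v ∈ S



/-! ### Duality for the standard lattice -/

/-- The standard basis of `ℤ^n ⊆ ℚ^n`. -/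
def stdBasis (n : ℕ) : Module.Basis (Fin n) ℤ (stdLat n) :=
  Module.Basis.span (R := ℤ) (v := fun i => (Pi.single i 1 : Amb n)) (by
    have h := (Pi.basisFun ℚ (Fin n)).linearIndependent
    have h' : LinearIndependent ℚ (fun i => (Pi.single i 1 : Amb n)) := by
      convert h using 1
      ext i : 1
      simp
    exact h'.restrict_scalars (by
      intro a b hab
      simpa using hab))

lemma stdBasis_apply (n : ℕ) (i : Fin n) :
    ((stdBasis n i : stdLat n) : Amb n) = Pi.single i 1 := by
  simp only [stdBasis]
  exact congrArg Subtype.val <|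
    Module.Basis.span_apply (R := ℤ) (v := fun i => (Pi.single i 1 : Amb n)) _ i

lemma bq_comm {n : ℕ} {G : Matrix (Fin n) (Fin n) ℚ} (hG : G.IsSymm) (x y : Amb n) :
    bq G x y = bq G y x := by
  unfold bq
  rw [dotProduct_comm, ← Matrix.vecMul_transpose, hG.eq, ← Matrix.dotProduct_mulVec]

/-- The map `V → Hom(ℤ^n, ℚ)` attached to the form of `G` on `V = ℚ^n`: a vector `x` goes to the
functional `s ↦ (s, x)`. -/
def toDual {n : ℕ} (G : Matrix (Fin n) (Fin n) ℚ) : Amb n →ₗ[ℤ] (stdLat n →ₗ[ℤ] ℚ) where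
  toFun x := (bqL G x) ∘ₗ (stdLat n).subtype
  map_add' x y := by
    ext s
    simp [bqL, bq, Matrix.mulVec_add]
  map_smul' k x := by
    ext s
    change (s : Amb n) ⬝ᵥ (G *ᵥ (k • x)) = k • ((s : Amb n) ⬝ᵥ (G *ᵥ x))
    rw [Matrix.mulVec_smul, dotProduct_smul]

lemma toDual_apply {n : ℕ} (G : Matrix (Fin n) (Fin n) ℚ) (x : Amb n) (s : stdLat n) :
    toDual G x s = bq G s x := rfl

lemma toDual_stdBasis {n : ℕ} (G : Matrix (Fin n) (Fin n) ℚ) (x : Amb n) (i : Fin n) :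
    toDual G x (stdBasis n i) = (G *ᵥ x) i := by
  rw [toDual_apply, stdBasis_apply, bq, single_one_dotProduct]

/-- For a nondegenerate form, `ℚ^n` is the full group of `ℚ`-valued functionals on `ℤ^n`. -/
lemma toDual_bijective {n : ℕ} {G : Matrix (Fin n) (Fin n) ℚ} (hG : G.det ≠ 0) :
    Function.Bijective (toDual G) := by
  have hu : IsUnit G.det := isUnit_iff_ne_zero.mpr hG
  constructor
  · rw [← LinearMap.ker_eq_bot, LinearMap.ker_eq_bot']
    intro x hx
    apply Matrix.eq_zero_of_mulVec_eq_zero hG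
    ext i
    rw [← toDual_stdBasis, hx]
    rfl
  · intro f
    refine ⟨G⁻¹ *ᵥ fun i => f (stdBasis n i), ?_⟩
    refine (stdBasis n).ext fun i => ?_
    rw [toDual_stdBasis, Matrix.mulVec_mulVec, Matrix.mul_nonsing_inv _ hu, Matrix.one_mulVec]

lemma span_rat_stdLat (n : ℕ) :
    Submodule.span ℚ ((stdLat n : Submodule ℤ (Amb n)) : Set (Amb n)) = ⊤ := by
  rw [eq_top_iff, ← (Pi.basisFun ℚ (Fin n)).span_eq, Submodule.span_le]
  rintro _ ⟨i, rfl⟩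
  apply Submodule.subset_span
  rw [Pi.basisFun_apply, ← stdBasis_apply]
  exact (stdBasis n i).2

/-- The dual lattice of `ℤ^n` consists of the vectors whose functional is integer-valued. -/
lemma mem_dualLat_iff {n : ℕ} {G : Matrix (Fin n) (Fin n) ℚ} (hG : G.IsSymm) (x : Amb n) :
    x ∈ dualLat G ↑(stdLat n) ↔ ∀ s : stdLat n, ∃ k : ℤ, toDual G x s = k := by
  simp only [dualLat, Submodule.mem_inf, span_rat_stdLat, Submodule.mem_iInf,
    Submodule.mem_comap, toDual_apply]
  constructor
  · rintro ⟨-, h⟩ s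
    obtain ⟨k, hk⟩ := h s s.2
    refine ⟨k, ?_⟩
    rw [bq_comm hG]
    exact hk.symm
  · refine fun h => ⟨trivial, fun y hy => ?_⟩
    obtain ⟨k, hk⟩ := h ⟨y, hy⟩
    refine ⟨k, ?_⟩
    rw [bq_comm hG] at hk
    exact hk.symm

/-! ### Projecting a unimodular lattice onto the dual of a primitive sublattice -/

/-- An injective map with free cokernel splits. -/
lemma exists_retraction {m n : ℕ} (φ : stdLat m →ₗ[ℤ] stdLat n) (hinj : Function.Injective φ)
    [Module.Free ℤ (stdLat n ⧸ LinearMap.range φ)] :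
    ∃ r : stdLat n →ₗ[ℤ] stdLat m, ∀ s, r (φ s) = s := by
  obtain ⟨σ, hσ⟩ := Module.projective_lifting_property (LinearMap.range φ).mkQ
    LinearMap.id (LinearMap.range φ).mkQ_surjective
  have hmem : ∀ v, (LinearMap.id - σ ∘ₗ (LinearMap.range φ).mkQ : stdLat n →ₗ[ℤ] stdLat n) v ∈ LinearMap.range φ := by
    intro v
    rw [← Submodule.Quotient.mk_eq_zero, ← Submodule.mkQ_apply, LinearMap.sub_apply, map_sub]
    have := LinearMap.congr_fun hσ ((LinearMap.range φ).mkQ v)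
    simp only [LinearMap.comp_apply, LinearMap.id_apply] at this ⊢
    rw [this, sub_self]
  refine ⟨(LinearEquiv.ofInjective φ hinj).symm.toLinearMap ∘ₗ
    LinearMap.codRestrict (LinearMap.range φ) _ hmem, fun s => ?_⟩
  rw [LinearMap.comp_apply, LinearEquiv.coe_coe, LinearEquiv.symm_apply_eq]
  ext1
  have h0 : (LinearMap.range φ).mkQ (φ s) = 0 := by
    rw [← LinearMap.mem_ker, Submodule.ker_mkQ]
    exact ⟨s, rfl⟩
  simp [LinearMap.codRestrict_apply, -Submodule.mkQ_apply, h0]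

/-- For a primitive isometric embedding `φ : S → L` with `L` unimodular, restricting functionals
from `L` to `S` gives a surjection `L ⧸ φ(S) → S* ⧸ S`. -/
lemma exists_surjection {m n : ℕ} {GrS : Matrix (Fin m) (Fin m) ℚ}
    {GrL : Matrix (Fin n) (Fin n) ℚ}
    (hsymS : GrS.IsSymm) (hdetS : GrS.det ≠ 0) (hsymL : GrL.IsSymm) (hdetL : GrL.det ≠ 0)
    (huniL : dualLat GrL ↑(stdLat n) = stdLat n)
    (φ : stdLat m →ₗ[ℤ] stdLat n) (hinj : Function.Injective φ)
    (hφ : ∀ x y : stdLat m, bq GrS ↑x ↑y = bq GrL ↑(φ x) ↑(φ y))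
    [Module.Free ℤ (stdLat n ⧸ LinearMap.range φ)] :
    ∃ p : (stdLat n ⧸ LinearMap.range φ) →ₗ[ℤ] disc GrS ↑(stdLat m),
      Function.Surjective p := by
  let DS := LinearEquiv.ofBijective (toDual GrS) (toDual_bijective hdetS)
  -- `ψ v` is the orthogonal projection of `v` to `S ⊗ ℚ`: it satisfies `(s, ψ v) = (φ s, v)`.
  let ψ : stdLat n →ₗ[ℤ] Amb m :=
    DS.symm.toLinearMap ∘ₗ LinearMap.lcomp ℤ ℚ φ ∘ₗ toDual GrL ∘ₗ (stdLat n).subtype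
  have hψ : ∀ v s, toDual GrS (ψ v) s = toDual GrL (v : Amb n) (φ s) := by
    intro v s
    have : toDual GrS (ψ v) = LinearMap.lcomp ℤ ℚ φ (toDual GrL (v : Amb n)) :=
      DS.apply_symm_apply _
    rw [this]
    rfl
  have hψmem : ∀ v, ψ v ∈ dualLat GrS ↑(stdLat m) := by
    intro v
    rw [mem_dualLat_iff hsymS]
    intro s
    rw [hψ]
    have hv : (v : Amb n) ∈ dualLat GrL ↑(stdLat n) := huniL.ge v.2
    exact (mem_dualLat_iff hsymL _).1 hv (φ s)
  have hψφ : ∀ s, ψ (φ s) = s := by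
    intro s
    apply (toDual_bijective hdetS).1
    ext t
    rw [hψ, toDual_apply, toDual_apply, hφ]
  let q : stdLat n →ₗ[ℤ] disc GrS ↑(stdLat m) :=
    Submodule.mkQ _ ∘ₗ LinearMap.codRestrict (dualLat GrS ↑(stdLat m)) ψ hψmem
  have hq : LinearMap.range φ ≤ LinearMap.ker q := by
    rintro _ ⟨s, rfl⟩
    rw [LinearMap.mem_ker, LinearMap.comp_apply, Submodule.mkQ_apply,
      Submodule.Quotient.mk_eq_zero, Submodule.mem_comap]
    refine Submodule.subset_span ?_
    change ψ (φ s) ∈ stdLat m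
    rw [hψφ]
    exact s.2
  refine ⟨(LinearMap.range φ).liftQ q hq, ?_⟩
  obtain ⟨r, hr⟩ := exists_retraction φ hinj
  intro y
  obtain ⟨x, rfl⟩ := Submodule.mkQ_surjective _ y
  -- Extend the functional of `x` from `S` to `L` along the retraction, and represent it by `w`.
  obtain ⟨w, hw⟩ := (toDual_bijective hdetL).2 (toDual GrS (x : Amb m) ∘ₗ r)
  have hwL : w ∈ stdLat n := by
    rw [← huniL, mem_dualLat_iff hsymL]
    intro s
    rw [hw]
    exact (mem_dualLat_iff hsymS _).1 x.2 (r s)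
  refine ⟨(LinearMap.range φ).mkQ ⟨w, hwL⟩, ?_⟩
  have hx : ψ ⟨w, hwL⟩ = x := by
    apply (toDual_bijective hdetS).1
    ext s
    rw [hψ, hw, LinearMap.comp_apply, hr]
  rw [Submodule.mkQ_apply, Submodule.liftQ_apply, LinearMap.comp_apply]
  congr 1
  exact Subtype.ext hx

/-- If `L` is even unimodular nondegenerate and `S` even nondegenerate with
`ℓ(S) > rk L − rk S`, there is no primitive embedding of `S` into `L`. -/
theorem statement1 (m n : ℕ) (GrS : Matrix (Fin m) (Fin m) ℚ) (GrL : Matrix (Fin n) (Fin n) ℚ)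
    (hsymS : GrS.IsSymm) (hdetS : GrS.det ≠ 0)
    (hintS : IsIntegral GrS ↑(stdLat m)) (hevenS : IsEven GrS ↑(stdLat m))
    (hsymL : GrL.IsSymm) (hdetL : GrL.det ≠ 0)
    (hintL : IsIntegral GrL ↑(stdLat n)) (hevenL : IsEven GrL ↑(stdLat n))
    (huniL : dualLat GrL ↑(stdLat n) = stdLat n)
    (hlen : (n : ℤ) - (m : ℤ) < (latLen GrS ↑(stdLat m) : ℤ)) :
    ¬ ∃ φ : ↥(stdLat m) →ₗ[ℤ] ↥(stdLat n),
        Function.Injective φ ∧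
        (∀ x y : ↥(stdLat m), bq GrS ↑x ↑y = bq GrL ↑(φ x) ↑(φ y)) ∧
        (∀ (v : ↥(stdLat n)) (k : ℤ), k ≠ 0 → k • v ∈ LinearMap.range φ →
          v ∈ LinearMap.range φ) := by
  rintro ⟨φ, hinj, hφ, hprim⟩
  have : Module.IsTorsionFree ℤ (stdLat n ⧸ LinearMap.range φ) := by
    rw [Module.isTorsionFree_iff_smul_eq_zero]
    intro k y hky
    by_contra! hne
    obtain ⟨v, rfl⟩ := Submodule.mkQ_surjective _ y
    refine hne.2 ?_
    rw [← map_smul, Submodule.mkQ_apply, Submodule.Quotient.mk_eq_zero] at hky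
    rw [Submodule.mkQ_apply, Submodule.Quotient.mk_eq_zero]
    exact hprim v k hne.1 hky
  have : Module.Finite ℤ (stdLat n) := Module.Finite.of_basis (stdBasis n)
  have : Module.Free ℤ (stdLat n ⧸ LinearMap.range φ) := Module.free_of_finite_type_torsion_free'
  obtain ⟨p, hp⟩ := exists_surjection hsymS hdetS hsymL hdetL huniL φ hinj hφ
  have hrank : Module.finrank ℤ (stdLat n ⧸ LinearMap.range φ) + m = n := by
    have h := (LinearMap.range φ).finrank_quotient_add_finrank
    rw [LinearMap.finrank_range_of_inj hinj, Module.finrank_eq_card_basis (stdBasis m),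
      Module.finrank_eq_card_basis (stdBasis n), Fintype.card_fin, Fintype.card_fin] at h
    exact h
  -- The images of a basis of `L ⧸ φ(S)` generate the discriminant group.
  let b := Module.finBasis ℤ (stdLat n ⧸ LinearMap.range φ)
  have hle : latLen GrS ↑(stdLat m) ≤ Module.finrank ℤ (stdLat n ⧸ LinearMap.range φ) := by
    refine Nat.sInf_le ⟨p ∘ b, ?_⟩
    rw [Set.range_comp, Submodule.span_image, b.span_eq, Submodule.map_top,
      LinearMap.range_eq_top.2 hp]
  omega

end K3Paper
end
end

section
/- The isometry τ satisfies τ(Λ) = Λ and has order 4 on Λ. The invariant lattice Λ^τ = {x ∈ Λ : τ(x) = x} equals the ℤ-span of κ_1, κ_2, κ_3, κ_4 (where κ_i = e_i+f_i+g_i+h_i), κ_5 = a_1+a_2, κ_6 = ρ, κ_7 = ω_1, κ_8 = ω_2 together with (κ_2+κ_4)/2, (κ_5+κ_7+κ_8)/2 and (κ_1+κ_4+κ_6+κ_7+κ_8)/2; the sublattice spanned by κ_1,…,κ_8 has index 2^3 in Λ^τ, and the discriminant group satisfies A_{Λ^τ} ≅ (ℤ/4ℤ)^4 × (ℤ/2ℤ)^2.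 -/
/-! The lattice `Λ^τ` is understood through the trace `N = 1 + τ + τ² + τ³`, which is
multiplication by `4` on the vectors fixed by `τ` and maps the standard basis into the span of
`κ₁,…,κ₈`.  Hence a linear identity holds on all `τ`-fixed vectors as soon as it holds on
`κ₁,…,κ₈` (`eq_sum_of_fixed`).

The eleven listed generators lie in `Λ` and are fixed by `τ`.  Conversely there are a basis
`v₁,…,v₈` of their span (`vB`) and linear forms `ℓ₁,…,ℓ₈` (`ellM`), integral on the generators
of `Λ`, such that `x = ∑ ℓᵢ(x) vᵢ` for every fixed `x`; so `Λ^τ` is the span (`fixTau_eq`).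

For the index, doubling the coordinates of `x ∈ Λ^τ` along `κ₄, κ₆, κ₈` and reducing mod 2
maps `Λ^τ` onto `(ℤ/2)³`, and the kernel is the span of `κ₁,…,κ₈` because the other five
coordinates are determined modulo `ℤ` by these three (`index_kappa`).

For the discriminant group, a Smith normal form of the Gram matrix of `Λ^τ` provides
`u₁,…,u₈ ∈ Λ^τ` (`uB`) with `(vᵢ, uⱼ) = dᵢ δᵢⱼ` and `d = (1,1,2,2,4,4,4,4)`.  Therefore
`y = ∑ (y, uᵢ)/dᵢ · vᵢ` on the rational span of `Λ^τ`; the numbers `(y, uᵢ)` are integers for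
`y` in the dual, and `y ∈ Λ^τ` exactly when `dᵢ ∣ (y, uᵢ)` for all `i` (`disc_fixTau`).

The finitely many identities between explicit rational vectors are evaluated by the kernel. -/

noncomputable section
open Matrix

namespace K3Paper

def kapV (i : Fin 4) : Amb 22 := eW i + fW i + gW i + hW i

/-! ### Linear forms with integral values -/

lemma exists_int_of_den {q : ℚ} (h : q.den = 1) : ∃ n : ℤ, q = n :=
  ⟨q.num, (Rat.den_eq_one_iff q).1 h |>.symm⟩

/-- Integrality of a linear form on a lattice can be tested on generators. -/
lemma int_on_span {n : ℕ} {S : Set (Amb n)} {p : Amb n} (h : ∀ s ∈ S, (s ⬝ᵥ p).den = 1)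
    {x : Amb n} (hx : x ∈ Submodule.span ℤ S) : ∃ k : ℤ, x ⬝ᵥ p = k := by
  induction hx using Submodule.span_induction with
  | mem s hs => exact exists_int_of_den (h s hs)
  | zero => exact ⟨0, by simp⟩
  | add a b _ _ ha hb =>
    obtain ⟨k, hk⟩ := ha
    obtain ⟨l, hl⟩ := hb
    exact ⟨k + l, by rw [add_dotProduct, hk, hl]; push_cast; rfl⟩
  | smul c a _ ha =>
    obtain ⟨k, hk⟩ := ha
    exact ⟨c * k, by rw [smul_dotProduct, hk, zsmul_eq_mul]; push_cast; rfl⟩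

/-- Linear forms taking integral values on `M`, viewed as homomorphisms `M → ℤ`. -/
lemma exists_intForms {n m : ℕ} (M : Submodule ℤ (Amb n)) (p : Fin m → Amb n)
    (h : ∀ i, ∀ x ∈ M, ∃ k : ℤ, x ⬝ᵥ p i = k) :
    ∃ L : Fin m → (M →+ ℤ), ∀ i x, ((L i x : ℤ) : ℚ) = (x : Amb n) ⬝ᵥ p i := by
  choose f hf using fun i (x : M) => h i x x.2
  refine ⟨fun i => AddMonoidHom.mk' (f i) fun a b => ?_, fun i x => (hf i x).symm⟩
  have := hf i (a + b)
  rw [Submodule.coe_add, add_dotProduct, hf, hf] at this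
  exact_mod_cast this.symm

lemma nonempty_quot_addEquiv {M T : Type*} [AddCommGroup M] [AddCommGroup T]
    (S : Submodule ℤ M) (F : M →+ T) (hs : Function.Surjective F)
    (hk : ∀ x, F x = 0 ↔ x ∈ S) : Nonempty ((M ⧸ S) ≃+ T) := by
  have hS : S = LinearMap.ker F.toIntLinearMap := by
    ext x
    rw [← hk x, LinearMap.mem_ker]
    rfl
  exact ⟨((Submodule.quotEquivOfEq _ _ hS).trans
    (F.toIntLinearMap.quotKerEquivOfSurjective hs)).toAddEquiv⟩

/-! ### The action of `τ` on `Λ` -/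

/-- The eight glue vectors `χ, α, β, γ, δ, ε, ζ, η`. -/
def glueV : Fin 8 → Amb 22 := ![chiV, alV, beV, gaV, deV, epV, zeV, etV]

lemma Lam_eq : Lam = Submodule.span ℤ (Set.range sb ∪ Set.range glueV) := by
  have : Set.range glueV = {chiV, alV, beV, gaV, deV, epV, zeV, etV} := by
    ext x
    simp [glueV]
    tauto
  rw [Lam, this]

lemma sb_mem_Lam (k : Fin 22) : sb k ∈ Lam :=
  Submodule.subset_span (Or.inl ⟨k, rfl⟩)

lemma glueV_mem_Lam (k : Fin 8) : glueV k ∈ Lam := by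
  rw [Lam_eq]
  exact Submodule.subset_span (Or.inr ⟨k, rfl⟩)

/-- Membership in `Λ`: up to an integral combination of glue vectors, all coordinates are
integers. -/
lemma mem_Lam_of_den (x : Amb 22) (c : Fin 8 → ℤ)
    (h : ∀ i, ((x - ∑ j, c j • glueV j) i).den = 1) : x ∈ Lam := by
  choose n hn using fun i => exists_int_of_den (h i)
  have hx : x = ∑ i, n i • sb i + ∑ j, c j • glueV j := by
    rw [← sub_eq_iff_eq_add]
    ext i
    rw [hn, Finset.sum_apply, Finset.sum_eq_single i]
    · simp [sb]
    · intro j _ hj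
      simp [sb, hj.symm]
    · simp
  rw [hx]
  exact add_mem (sum_mem fun i _ => zsmul_mem (sb_mem_Lam i) _)
    (sum_mem fun j _ => zsmul_mem (glueV_mem_Lam j) _)

/-- The images of the glue vectors under `τ`, modulo `ℤ²²`, in terms of the glue vectors. -/
def tauGlue : Matrix (Fin 8) (Fin 8) ℤ :=
  !![0, 0, 0, 0, 2, 0, 0, 0;
     0, 0, 1, 0, 0, 0, 0, 0;
     0, 0, 0, 1, 0, 0, 0, 0;
     0, 0, 0, 0, 1, 0, 0, 0;
     0, 1, 0, 0, 0, 0, 0, 0;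
     0, 1, 1, 1, 1, 1, 0, 0;
     0, 0, 0, 1, 1, 1, 1, 0;
     0, 0, 0, 1, 1, 1, 0, 1]

/-- Two linear maps agreeing on the standard basis agree. -/
lemma linearMap_ext_sb {f g : Amb 22 →ₗ[ℚ] Amb 22} (h : ∀ k, f (sb k) = g (sb k)) : f = g :=
  (Pi.basisFun ℚ (Fin 22)).ext fun k => by simpa [sb] using h k

/-- `τ` as a signed permutation of the coordinates. -/
def tauP : Amb 22 →ₗ[ℚ] Amb 22 where
  toFun x := ![x 12, x 13, x 14, x 15, x 0, x 1, x 2, x 3, x 4, x 5, x 6, x 7, x 8, x 9, x 10,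
    x 11, x 17, x 16, -x 18, x 19, x 20, x 21]
  map_add' a b := by
    funext i
    fin_cases i <;> simp [add_comm]
  map_smul' c a := by
    funext i
    fin_cases i <;> simp

lemma tauL_eq : tauL = tauP := by
  have h : ∀ k i, tauMat i k = tauP (sb k) i := by decide +kernel
  refine linearMap_ext_sb fun k => funext fun i => ?_
  rw [← h, tauL, sb, Matrix.mulVecLin_apply, Matrix.mulVec_single_one]
  rfl

lemma tauL_mem_Lam {x : Amb 22} (hx : x ∈ Lam) : tauL x ∈ Lam := by
  have hle : Lam ≤ Lam.comap (tauL.restrictScalars ℤ) := by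
    conv_lhs => rw [Lam_eq]
    rw [Submodule.span_le]
    rintro _ (⟨k, rfl⟩ | ⟨k, rfl⟩)
    · have h : ∀ k i, ((tauL (sb k) - ∑ j, (0 : Fin 8 → ℤ) j • glueV j) i).den = 1 := by
        rw [tauL_eq]
        decide +kernel
      exact mem_Lam_of_den _ _ (h k)
    · have h : ∀ k i, ((tauL (glueV k) - ∑ j, tauGlue k j • glueV j) i).den = 1 := by
        rw [tauL_eq]
        decide +kernel
      exact mem_Lam_of_den _ _ (h k)
  exact hle hx

lemma tauL_pow_four (x : Amb 22) : tauL (tauL (tauL (tauL x))) = x := by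
  have h : ∀ k, tauL (tauL (tauL (tauL (sb k)))) = sb k := by
    rw [tauL_eq]
    decide +kernel
  exact LinearMap.congr_fun
    (linearMap_ext_sb (f := tauL ∘ₗ tauL ∘ₗ tauL ∘ₗ tauL) (g := LinearMap.id) h) x

lemma map_tauL_Lam : Submodule.map (tauL.restrictScalars ℤ) Lam = Lam := by
  apply le_antisymm
  · rw [Submodule.map_le_iff_le_comap]
    exact fun x hx => tauL_mem_Lam hx
  · exact fun x hx => ⟨tauL (tauL (tauL x)),
      tauL_mem_Lam (tauL_mem_Lam (tauL_mem_Lam hx)), tauL_pow_four x⟩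

/-! ### Vectors fixed by `τ` -/

lemma mem_FixTau {x : Amb 22} : x ∈ FixTau ↔ x ∈ Lam ∧ tauL x = x := by
  simp [FixTau, sub_eq_zero]

/-- The vectors `κ₁,…,κ₈`. -/
def kap : Fin 8 → Amb 22 :=
  ![kapV 0, kapV 1, kapV 2, kapV 3, a1V + a2V, rhV, om1V, om2V]

/-- The trace `1 + τ + τ² + τ³`. -/
def trL : Amb 22 →ₗ[ℚ] Amb 22 :=
  LinearMap.id + tauL + tauL ∘ₗ tauL + tauL ∘ₗ tauL ∘ₗ tauL

lemma trL_of_fixed {y : Amb 22} (hy : tauL y = y) : trL y = (4 : ℚ) • y := by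
  simp only [trL, LinearMap.add_apply, LinearMap.id_apply, LinearMap.comp_apply, hy]
  module

/-- The multiplicity of a vector `κⱼ` in the trace of a standard basis vector. -/
def trM : Matrix (Fin 22) (Fin 8) ℚ := Matrix.of fun k j =>
  if k.1 < 16 then (if k.1 % 4 = j.1 then 1 else 0)
  else if k.1 < 18 then (if j.1 = 4 then 2 else 0)
  else if k.1 = 18 then 0
  else (if k.1 = j.1 + 14 then 4 else 0)

lemma trL_sb (k : Fin 22) : trL (sb k) = ∑ j, trM k j • kap j := by
  have h : ∀ k, trL (sb k) = ∑ j, trM k j • kap j := by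
    rw [trL, tauL_eq]
    decide +kernel
  exact h k

/-- If the values `A j i` of the forms `pᵢ` at `κⱼ` satisfy `κⱼ = ∑ A j i • wᵢ`, then
`y = ∑ (y · pᵢ) wᵢ` for every vector `y` fixed by `τ`. -/
lemma eq_sum_of_fixed (p w : Fin 8 → Amb 22) (A : Matrix (Fin 8) (Fin 8) ℤ)
    (hp : ∀ j i, kap j ⬝ᵥ p i = A j i) (hw : ∀ j, kap j = ∑ i, A j i • w i)
    {y : Amb 22} (hy : tauL y = y) : y = ∑ i, (y ⬝ᵥ p i) • w i := by
  let D : Amb 22 →ₗ[ℚ] Amb 22 :=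
    { toFun := fun x => ∑ i, (x ⬝ᵥ p i) • w i
      map_add' := fun a b => by simp [add_dotProduct, add_smul, Finset.sum_add_distrib]
      map_smul' := fun c a => by simp [smul_dotProduct, mul_smul, Finset.smul_sum] }
  have hDk : ∀ j, D (kap j) = kap j := by
    intro j
    refine Eq.trans ?_ (hw j).symm
    change ∑ i, (kap j ⬝ᵥ p i) • w i = _
    refine Finset.sum_congr rfl fun i _ => ?_
    rw [hp, Int.cast_smul_eq_zsmul]
  have hD : trL = D ∘ₗ trL := by
    refine linearMap_ext_sb fun k => ?_
    rw [LinearMap.comp_apply, trL_sb]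
    simp only [map_sum, map_smul, hDk]
  have h4 : (4 : ℚ) • y = (4 : ℚ) • D y := by
    have := LinearMap.congr_fun hD y
    rwa [LinearMap.comp_apply, trL_of_fixed hy, map_smul] at this
  exact smul_right_injective _ (by norm_num : (4 : ℚ) ≠ 0) h4

/-! ### Generators of the invariant lattice -/

/-- The eleven generators of `Λ^τ`: `κ₁,…,κ₈` and the three half-integral vectors. -/
def genV : Fin 11 → Amb 22 :=
  ![kapV 0, kapV 1, kapV 2, kapV 3, a1V + a2V, rhV, om1V, om2V,
    (2:ℚ)⁻¹ • (kapV 1 + kapV 3), (2:ℚ)⁻¹ • (a1V + a2V + om1V + om2V),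
    (2:ℚ)⁻¹ • (kapV 0 + kapV 3 + rhV + om1V + om2V)]

lemma range_kap : Set.range kap =
    {kapV 0, kapV 1, kapV 2, kapV 3, a1V + a2V, rhV, om1V, om2V} := by
  ext x
  simp [kap]
  tauto

lemma range_genV : Set.range genV =
    {kapV 0, kapV 1, kapV 2, kapV 3, a1V + a2V, rhV, om1V, om2V,
      (2:ℚ)⁻¹ • (kapV 1 + kapV 3), (2:ℚ)⁻¹ • (a1V + a2V + om1V + om2V),
      (2:ℚ)⁻¹ • (kapV 0 + kapV 3 + rhV + om1V + om2V)} := by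
  ext x
  simp [genV]
  tauto

/-- The generators of `Λ^τ`, modulo `ℤ²²`, in terms of the glue vectors. -/
def genGlue : Matrix (Fin 11) (Fin 8) ℤ :=
  !![0, 0, 0, 0, 0, 0, 0, 0;
     0, 0, 0, 0, 0, 0, 0, 0;
     0, 0, 0, 0, 0, 0, 0, 0;
     0, 0, 0, 0, 0, 0, 0, 0;
     0, 0, 0, 0, 0, 0, 0, 0;
     0, 0, 0, 0, 0, 0, 0, 0;
     0, 0, 0, 0, 0, 0, 0, 0;
     0, 0, 0, 0, 0, 0, 0, 0;
     0, 1, 1, 1, 1, 0, 0, 0;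
     0, 0, 0, 0, 0, 0, 1, 1;
     0, 0, 1, 0, 3, 1, 1, 1]

lemma genV_mem (j : Fin 11) : genV j ∈ FixTau := by
  have h1 : ∀ j i, ((genV j - ∑ k, genGlue j k • glueV k) i).den = 1 := by decide +kernel
  have h2 : ∀ j, tauL (genV j) = genV j := by
    rw [tauL_eq]
    decide +kernel
  exact mem_FixTau.2 ⟨mem_Lam_of_den _ _ (h1 j), h2 j⟩

/-- Coefficients of the basis `vB` in terms of the eleven generators. -/
def vM : Matrix (Fin 8) (Fin 11) ℤ :=
  !![0, 0, 0, 0, 0, 0, 0, 0, 0, 1, 0;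
     0, 0, 0, 0, 0, 0, 1, 0, 0, -2, 0;
     0, 0, 0, 0, 0, 0, -1, 0, 0, 1, 1;
     0, 0, 0, 0, 0, 0, 0, 0, 1, 0, 0;
     0, 0, 1, 0, 0, 0, 0, 0, 2, 0, 0;
     0, 1, 0, 0, 0, 0, 0, 0, 0, 0, 0;
     0, 0, 2, 0, 1, 0, 0, 0, 1, -2, 2;
     1, 0, 2, 0, 0, 0, 0, 0, 2, 0, 0]

/-- Coefficients of the basis `uB` in terms of the eleven generators. -/
def uM : Matrix (Fin 8) (Fin 11) ℤ :=
  !![0, 0, 0, 0, 0, 0, 1, 0, 0, 0, 0;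
     0, 0, 0, 0, 0, 0, 0, 0, 0, 1, 0;
     0, 0, 0, 0, -1, 0, -2, 0, 0, 4, 0;
     0, 0, 0, 0, 1, 0, 3, 0, 0, -5, -1;
     1, 0, 0, 0, -2, 0, -4, 0, 0, 8, 0;
     -1, 0, 0, 0, 1, 0, 0, 0, -1, -2, 2;
     -1, 1, 0, 0, 2, 0, 2, 0, -2, -6, 2;
     0, -1, -1, 0, -1, 0, 0, 0, 1, 2, -2]

/-- A basis of `Λ^τ`; together with `uB` it diagonalizes the Gram matrix of `Λ^τ`. -/
def vB (i : Fin 8) : Amb 22 := ∑ j, vM i j • genV j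

/-- A basis of `Λ^τ` with `(vB i, uB j) = dS i` if `i = j`, and `0` otherwise. -/
def uB (i : Fin 8) : Amb 22 := ∑ j, uM i j • genV j

/-- The invariant factors of the Gram matrix of `Λ^τ`. -/
def dS : Fin 8 → ℕ := ![1, 1, 2, 2, 4, 4, 4, 4]

/-- Linear forms, integral on `Λ`, whose restrictions to `Λ^τ` form the basis dual to `vB`. -/
def ellM : Fin 8 → Amb 22 :=
  ![![0, 1, 0, -1, 0, -2, 0, 1, 0, 0, 0, 0, 0, 1, 0, 0, -1, 1, -4, 0, 2, 0],
    ![0, -4, 0, 2, 0, 8, 0, -4, 0, 0, 0, 0, 0, -4, 0, 2, -1, -1, 16, 0, 1, 1],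
    ![0, -4, 0, 2, 0, 8, 0, -4, 0, 0, 0, 0, 0, -4, 0, 2, 0, -2, 16, 0, 0, 2],
    ![0, 7, 0, -3, 2, -13, 0, 7, 0, 0, -2, 0, 0, 6, 0, -2, 0, 3, -31, -1, 0, -3],
    ![0, -2, 0, 0, -2, 2, 0, 0, 0, 0, 1, 0, 0, 0, 0, 0, 0, -2, 8, 0, 0, 2],
    ![0, 0, 0, 1, 0, 3, 0, -2, 0, 0, 0, 0, 0, -2, 0, 0, 0, 0, 3, 1, 0, 0],
    ![0, 3, 0, -1, 0, -5, 0, 3, 0, 0, 0, 0, 0, 2, 0, -2, 0, 1, -13, 1, 0, -1],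
    ![0, -2, 0, 1, 1, 4, 0, -3, 0, 0, 0, 0, 0, -2, 0, 2, 0, 0, 9, -1, 0, 0]]

/-- The coordinates of `κ₁,…,κ₈` in the basis `vB`. -/
def kapM : Matrix (Fin 8) (Fin 8) ℤ :=
  !![0, 0, 0, 2, -2, 0, 0, 1;
     0, 0, 0, 0, 0, 1, 0, 0;
     0, 0, 0, -2, 1, 0, 0, 0;
     0, 0, 0, 2, 0, -1, 0, 0;
     0, -2, -2, 3, -2, 0, 1, 0;
     0, 0, 0, -1, 0, 1, 1, -1;
     2, 1, 0, 0, 0, 0, 0, 0;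
     0, 1, 2, -3, 2, 0, -1, 0]

lemma kap_eq_sum_vB (j : Fin 8) : kap j = ∑ i, kapM j i • vB i := by
  have h : ∀ j, kap j = ∑ i, kapM j i • vB i := by decide +kernel
  exact h j

lemma int_ellM (i : Fin 8) {x : Amb 22} (hx : x ∈ Lam) : ∃ k : ℤ, x ⬝ᵥ ellM i = k := by
  rw [Lam_eq] at hx
  refine int_on_span ?_ hx
  have h1 : ∀ i k, (ellM i k).den = 1 := by decide +kernel
  have h2 : ∀ i k, (glueV k ⬝ᵥ ellM i).den = 1 := by decide +kernel
  rintro _ (⟨k, rfl⟩ | ⟨k, rfl⟩)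
  · rw [sb, single_one_dotProduct]
    exact h1 i k
  · exact h2 i k

theorem fixTau_eq : FixTau = Submodule.span ℤ (Set.range genV) := by
  apply le_antisymm
  · intro y hy
    obtain ⟨hyL, hyf⟩ := mem_FixTau.1 hy
    have h : ∀ j i, kap j ⬝ᵥ ellM i = kapM j i := by decide +kernel
    rw [eq_sum_of_fixed ellM vB kapM h kap_eq_sum_vB hyf]
    refine sum_mem fun i _ => ?_
    obtain ⟨k, hk⟩ := int_ellM i hyL
    rw [hk, Int.cast_smul_eq_zsmul]
    exact zsmul_mem (sum_mem fun j _ => zsmul_mem (Submodule.subset_span (Set.mem_range_self j)) _) _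
  · rw [Submodule.span_le]
    rintro _ ⟨j, rfl⟩
    exact genV_mem j

lemma vB_mem (i : Fin 8) : vB i ∈ FixTau := sum_mem fun j _ => zsmul_mem (genV_mem j) _

lemma uB_mem (i : Fin 8) : uB i ∈ FixTau := sum_mem fun j _ => zsmul_mem (genV_mem j) _

/-- Integrality of a linear form on `Λ^τ` can be tested on the eleven generators. -/
lemma int_on_FixTau {p : Amb 22} (h : ∀ j, (genV j ⬝ᵥ p).den = 1) {x : Amb 22}
    (hx : x ∈ FixTau) : ∃ k : ℤ, x ⬝ᵥ p = k := by
  rw [fixTau_eq] at hx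
  refine int_on_span ?_ hx
  rintro _ ⟨j, rfl⟩
  exact h j

/-! ### The index of the span of `κ₁,…,κ₈` -/

/-- Doubled coordinates along `κ₄, κ₆, κ₈`; they are integral on `Λ^τ`. -/
def idxM : Fin 3 → Amb 22 := ![(2:ℚ) • sb 3, (2:ℚ) • sb 19, (2:ℚ) • sb 21]

/-- The coordinates along `κ₁,…,κ₈` on the vectors fixed by `τ`. -/
def coordM : Fin 8 → Amb 22 := ![sb 0, sb 1, sb 2, sb 3, sb 16, sb 19, sb 20, sb 21]

/-- Corrections by coordinates along `κ₄, κ₆, κ₈` which make each coordinate `coordM i`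
integral on `Λ^τ`. -/
def corrM : Matrix (Fin 8) (Fin 3) ℤ :=
  !![0, 1, 0; 1, -1, 0; 0, 0, 0; 1, 0, 0; 0, -1, 1; 0, 1, 0; 0, 0, 1; 0, 0, 1]

theorem index_kappa : subIndex (Submodule.span ℤ (Set.range kap)) FixTau = 8 := by
  have hint : ∀ i j, (genV j ⬝ᵥ idxM i).den = 1 := by decide +kernel
  obtain ⟨L, hL⟩ := exists_intForms FixTau idxM fun i x hx => int_on_FixTau (hint i) hx
  let F : FixTau →+ (Fin 3 → ZMod 2) :=
    AddMonoidHom.pi fun i => (Int.castAddHom (ZMod 2)).comp (L i)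
  have hF : ∀ x i, F x i = (L i x : ZMod 2) := fun _ _ => rfl
  have hs : Function.Surjective F := by
    intro t
    -- the half-integral generators have images `(1,0,0)`, `(0,0,1)` and `(1,1,1)`
    choose n hn using fun i => ZMod.intCast_surjective (t i)
    let y : FixTau := (n 0 - n 1) • ⟨genV 8, genV_mem 8⟩ + (n 2 - n 1) • ⟨genV 9, genV_mem 9⟩
      + n 1 • ⟨genV 10, genV_mem 10⟩
    have h : ∀ i, genV 8 ⬝ᵥ idxM i = ![1, 0, 0] i ∧ genV 9 ⬝ᵥ idxM i = ![0, 0, 1] i ∧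
        genV 10 ⬝ᵥ idxM i = 1 := by decide +kernel
    refine ⟨y, funext fun i => ?_⟩
    have hy : L i y = n i := by
      have : ((L i y : ℤ) : ℚ) = n i := by
        rw [hL]
        obtain ⟨h1, h2, h3⟩ := h i
        simp only [y, Submodule.coe_add, Submodule.coe_smul, add_dotProduct, smul_dotProduct]
        rw [h1, h2, h3]
        fin_cases i <;> simp
      exact_mod_cast this
    rw [hF, hy, hn]
  have hk : ∀ x, F x = 0 ↔
      x ∈ Submodule.comap FixTau.subtype (Submodule.span ℤ (Set.range kap)) := by
    intro x
    constructor
    · intro hx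
      have hdiv : ∀ i, ∃ m : ℤ, (x : Amb 22) ⬝ᵥ idxM i = 2 * m := by
        intro i
        obtain ⟨m, hm⟩ := (ZMod.intCast_zmod_eq_zero_iff_dvd (L i x) 2).1 (congrFun hx i)
        exact ⟨m, by rw [← hL, hm]; push_cast; rfl⟩
      choose m hm using hdiv
      have hc : ∀ j i, kap j ⬝ᵥ coordM i = (1 : Matrix (Fin 8) (Fin 8) ℤ) j i := by
        decide +kernel
      show (x : Amb 22) ∈ Submodule.span ℤ (Set.range kap)
      rw [eq_sum_of_fixed coordM kap 1 hc (fun j => by simp [Matrix.one_apply]) (mem_FixTau.1 x.2).2]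
      refine sum_mem fun i _ => ?_
      have hi : ∀ i j, (genV j ⬝ᵥ (coordM i - (2:ℚ)⁻¹ • ∑ l, corrM i l • idxM l)).den = 1 := by
        decide +kernel
      obtain ⟨k, hk⟩ := int_on_FixTau (hi i) x.2
      have : (x : Amb 22) ⬝ᵥ coordM i = ((k + ∑ l, corrM i l * m l : ℤ) : ℚ) := by
        rw [dotProduct_sub, sub_eq_iff_eq_add] at hk
        rw [hk, dotProduct_smul, dotProduct_sum]
        simp only [dotProduct_smul, hm]
        simp only [zsmul_eq_mul, smul_eq_mul, Fin.sum_univ_three]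
        push_cast
        ring
      rw [this, Int.cast_smul_eq_zsmul]
      exact zsmul_mem (Submodule.subset_span (Set.mem_range_self i)) _
    · intro hx
      have hi : ∀ i j, (kap j ⬝ᵥ ((2:ℚ)⁻¹ • idxM i)).den = 1 := by decide +kernel
      funext i
      obtain ⟨k, hk⟩ := int_on_span (p := (2:ℚ)⁻¹ • idxM i)
        (S := Set.range kap) (by rintro _ ⟨j, rfl⟩; exact hi i j) (show (x : Amb 22) ∈ Submodule.span ℤ (Set.range kap) from hx)
      rw [dotProduct_smul, ← hL, smul_eq_mul] at hk
      have : L i x = 2 * k := by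
        have : ((L i x : ℤ) : ℚ) = 2 * k := by linarith
        exact_mod_cast this
      rw [hF]
      exact (ZMod.intCast_zmod_eq_zero_iff_dvd _ 2).2 ⟨k, this⟩
  obtain ⟨e⟩ := nonempty_quot_addEquiv _ F hs hk
  rw [subIndex, Nat.card_congr e.toEquiv]
  simp

/-! ### The discriminant group -/

/-- The linear forms `x ↦ (x, uB i)`. -/
def pU : Fin 8 → Amb 22 :=
  ![![0, 0, 0, 0, 0, 0, 0, 0, 0, 0, 0, 0, 0, 0, 0, 0, 0, 0, 0, 0, 2, 0],
    ![0, 0, 0, 0, 0, 0, 0, 0, 0, 0, 0, 0, 0, 0, 0, 0, -1, -1, 0, 0, 1, 1],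
    ![0, 0, 0, 0, 0, 0, 0, 0, 0, 0, 0, 0, 0, 0, 0, 0, -2, -2, 0, 0, 0, 4],
    ![1, 0, -1, 1, 1, 0, -1, 1, 1, 0, -1, 1, 1, 0, -1, 1, 3, 3, 0, -2, 0, -6],
    ![-2, 0, 1, 0, -2, 0, 1, 0, -2, 0, 1, 0, -2, 0, 1, 0, -4, -4, 0, 0, 0, 8],
    ![0, 1, 0, -1, 0, 1, 0, -1, 0, 1, 0, -1, 0, 1, 0, -1, 0, 0, 0, 4, 0, 0],
    ![0, 0, 0, 0, 0, 0, 0, 0, 0, 0, 0, 0, 0, 0, 0, 0, 2, 2, 0, 4, 0, -4],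
    ![1, 0, 0, 0, 1, 0, 0, 0, 1, 0, 0, 0, 1, 0, 0, 0, 0, 0, 0, -4, 0, 0]]

/-- The linear forms `x ↦ (vB i / dS i, x)`. -/
def pV : Fin 8 → Amb 22 :=
  ![![0, 0, 0, 0, 0, 0, 0, 0, 0, 0, 0, 0, 0, 0, 0, 0, -1, -1, 0, 0, 1, 1],
    ![0, 0, 0, 0, 0, 0, 0, 0, 0, 0, 0, 0, 0, 0, 0, 0, 2, 2, 0, 0, 0, -2],
    ![-1/2, 0, 1/2, -1/2, -1/2, 0, 1/2, -1/2, -1/2, 0, 1/2, -1/2, -1/2, 0, 1/2, -1/2, -1/2, -1/2, 0, 1, 0, 1],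
    ![0, -1/2, 1/2, -1/2, 0, -1/2, 1/2, -1/2, 0, -1/2, 1/2, -1/2, 0, -1/2, 1/2, -1/2, 0, 0, 0, 0, 0, 0],
    ![1/4, -1/4, 0, -1/4, 1/4, -1/4, 0, -1/4, 1/4, -1/4, 0, -1/4, 1/4, -1/4, 0, -1/4, 0, 0, 0, 0, 0, 0],
    ![0, -1/2, 1/4, 0, 0, -1/2, 1/4, 0, 0, -1/2, 1/4, 0, 0, -1/2, 1/4, 0, 0, 0, 0, 0, 0, 0],
    ![0, 1/4, -1/4, -1/4, 0, 1/4, -1/4, -1/4, 0, 1/4, -1/4, -1/4, 0, 1/4, -1/4, -1/4, 0, 0, 0, 1, 0, 0],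
    ![0, 0, -1/4, 0, 0, 0, -1/4, 0, 0, 0, -1/4, 0, 0, 0, -1/4, 0, 0, 0, 0, 0, 0, 0]]

lemma gramW_mulVec_uB (i : Fin 8) : gramW *ᵥ uB i = pU i := by
  have h : ∀ i, gramW *ᵥ uB i = pU i := by decide +kernel
  exact h i

lemma vB_vecMul_gramW (i : Fin 8) : vB i ᵥ* gramW = (dS i : ℚ) • pV i := by
  have h : ∀ i, vB i ᵥ* gramW = (dS i : ℚ) • pV i := by decide +kernel
  exact h i

lemma bq_vB_uB (i j : Fin 8) : bq gramW (vB i) (uB j) = if i = j then (dS i : ℚ) else 0 := by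
  have h : ∀ i j, vB i ⬝ᵥ pU j = if i = j then (dS i : ℚ) else 0 := by decide +kernel
  rw [bq, gramW_mulVec_uB]
  exact h i j

lemma dS_ne_zero (i : Fin 8) : (dS i : ℚ) ≠ 0 := by
  have h : ∀ i, (dS i : ℚ) ≠ 0 := by decide +kernel
  exact h i

lemma mem_dual {y : Amb 22} : y ∈ dualLat gramW (FixTau : Set (Amb 22)) ↔
    y ∈ Submodule.span ℚ (FixTau : Set (Amb 22)) ∧ ∀ w ∈ FixTau, ∃ k : ℤ, bq gramW y w = k := by
  simp only [dualLat, intQ, Submodule.mem_inf, Submodule.mem_iInf, Submodule.restrictScalars_mem,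
    Submodule.mem_comap, LinearMap.mem_range, SetLike.mem_coe]
  refine and_congr_right fun _ => forall₂_congr fun w _ => exists_congr fun k => ?_
  exact eq_comm

lemma fixed_of_mem_dual {y : Amb 22} (hy : y ∈ dualLat gramW (FixTau : Set (Amb 22))) :
    tauL y = y := by
  have hle : Submodule.span ℚ (FixTau : Set (Amb 22)) ≤ LinearMap.eqLocus tauL LinearMap.id :=
    Submodule.span_le.2 fun x hx => (mem_FixTau.1 hx).2
  exact hle (mem_dual.1 hy).1

lemma eq_sum_vB {y : Amb 22} (hy : tauL y = y) :
    y = ∑ i, (bq gramW y (uB i) / dS i) • vB i := by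
  have h : ∀ j i, kap j ⬝ᵥ ((dS i : ℚ)⁻¹ • pU i) = kapM j i := by decide +kernel
  conv_lhs => rw [eq_sum_of_fixed _ vB kapM h kap_eq_sum_vB hy]
  refine Finset.sum_congr rfl fun i _ => ?_
  rw [dotProduct_smul, smul_eq_mul, bq, gramW_mulVec_uB, div_eq_inv_mul]

lemma vB_div_mem_dual (i : Fin 8) :
    (dS i : ℚ)⁻¹ • vB i ∈ dualLat gramW (FixTau : Set (Amb 22)) := by
  refine mem_dual.2 ⟨Submodule.smul_mem _ _ (Submodule.subset_span (vB_mem i)), fun w hw => ?_⟩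
  have h : ∀ i j, (genV j ⬝ᵥ pV i).den = 1 := by decide +kernel
  obtain ⟨k, hk⟩ := int_on_FixTau (h i) hw
  exact ⟨k, by rw [← hk, bq, dotProduct_mulVec, smul_vecMul, vB_vecMul_gramW,
    inv_smul_smul₀ (dS_ne_zero i), dotProduct_comm]⟩

theorem disc_fixTau :
    Nonempty (disc gramW ↑FixTau ≃+ ((Fin 4 → ZMod 4) × (Fin 2 → ZMod 2))) := by
  obtain ⟨L, hL⟩ := exists_intForms (dualLat gramW (FixTau : Set (Amb 22)))
    (fun i => gramW *ᵥ uB i) fun i x hx => (mem_dual.1 hx).2 _ (uB_mem i)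
  -- the invariant factors are `4` at the indices `4,…,7` and `2` at the indices `2, 3`
  let F : dualLat gramW (FixTau : Set (Amb 22)) →+ ((Fin 4 → ZMod 4) × (Fin 2 → ZMod 2)) :=
    (AddMonoidHom.pi fun i : Fin 4 =>
      (Int.castAddHom (ZMod 4)).comp (L (Fin.natAdd 4 i))).prod
    (AddMonoidHom.pi fun i : Fin 2 =>
      (Int.castAddHom (ZMod 2)).comp (L ⟨2 + i, by omega⟩))
  have hF1 : ∀ x i, (F x).1 i = (L (Fin.natAdd 4 i) x : ZMod 4) := fun _ _ => rfl
  have hF2 : ∀ x i, (F x).2 i = (L ⟨2 + i, by omega⟩ x : ZMod 2) := fun _ _ => rfl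
  have hs : Function.Surjective F := by
    rintro ⟨s, t⟩
    choose a ha using fun i => ZMod.intCast_surjective (s i)
    choose b hb using fun i => ZMod.intCast_surjective (t i)
    let n : Fin 8 → ℤ := ![0, 0, b 0, b 1, a 0, a 1, a 2, a 3]
    let y : dualLat gramW (FixTau : Set (Amb 22)) :=
      ∑ i, n i • ⟨(dS i : ℚ)⁻¹ • vB i, vB_div_mem_dual i⟩
    have hy : ∀ j, L j y = n j := by
      intro j
      have : ∀ i, L j ⟨(dS i : ℚ)⁻¹ • vB i, vB_div_mem_dual i⟩ = if i = j then 1 else 0 := by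
        intro i
        have h : ((L j ⟨(dS i : ℚ)⁻¹ • vB i, vB_div_mem_dual i⟩ : ℤ) : ℚ)
            = if i = j then 1 else 0 := by
          have h0 := bq_vB_uB i j
          rw [bq] at h0
          rw [hL, smul_dotProduct, h0]
          split_ifs
          · exact inv_mul_cancel₀ (dS_ne_zero i)
          · exact smul_zero _
        exact_mod_cast h
      simp only [y, map_sum, map_zsmul, this]
      simp
    refine ⟨y, Prod.ext (funext fun i => ?_) (funext fun i => ?_)⟩
    · rw [hF1, hy]
      refine Eq.trans ?_ (ha i)
      fin_cases i <;> rfl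
    · rw [hF2, hy]
      refine Eq.trans ?_ (hb i)
      fin_cases i <;> rfl
  have hker : ∀ x, F x = 0 ↔ ∀ i, (dS i : ℤ) ∣ L i x := by
    intro x
    rw [Prod.ext_iff, funext_iff, funext_iff]
    simp only [hF1, hF2, Prod.fst_zero, Prod.snd_zero, Pi.zero_apply,
      ZMod.intCast_zmod_eq_zero_iff_dvd]
    simp only [Fin.forall_fin_succ, dS]
    simp
    tauto
  have hk : ∀ x, F x = 0 ↔ x ∈ Submodule.comap
      (dualLat gramW (FixTau : Set (Amb 22))).subtype
      (Submodule.span ℤ (FixTau : Set (Amb 22))) := by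
    intro x
    rw [hker, Submodule.span_eq, Submodule.mem_comap, Submodule.subtype_apply]
    constructor
    · intro h
      rw [eq_sum_vB (fixed_of_mem_dual x.2)]
      refine sum_mem fun i _ => ?_
      obtain ⟨m, hm⟩ := h i
      have : bq gramW x (uB i) / dS i = (m : ℚ) := by
        rw [bq, ← hL, hm]
        push_cast
        exact mul_div_cancel_left₀ _ (dS_ne_zero i)
      rw [this, Int.cast_smul_eq_zsmul]
      exact zsmul_mem (vB_mem i) _
    · intro h i
      have hi : ∀ i j, (genV j ⬝ᵥ ((dS i : ℚ)⁻¹ • pU i)).den = 1 := by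
        decide +kernel
      obtain ⟨m, hm⟩ := int_on_FixTau (hi i) h
      rw [← gramW_mulVec_uB, dotProduct_smul, ← hL, smul_eq_mul, inv_mul_eq_iff_eq_mul₀ (dS_ne_zero i)] at hm
      exact ⟨m, by exact_mod_cast hm⟩
  exact nonempty_quot_addEquiv _ F hs hk

/-- `τ(Λ) = Λ`, `τ` has order 4 on `Λ`, and the invariant lattice `Λ^τ` is
as described: it is spanned by `κ₁,…,κ₈` together with the three listed half-integer
elements, the span of `κ₁,…,κ₈` has index `2³` in it, and its discriminant group is
`(ℤ/4ℤ)⁴ × (ℤ/2ℤ)²`. -/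
theorem statement3 :
    Submodule.map (tauL.restrictScalars ℤ) Lam = Lam ∧
    (∀ x ∈ Lam, tauL (tauL (tauL (tauL x))) = x) ∧
    (∃ x ∈ Lam, tauL (tauL x) ≠ x) ∧
    FixTau = Submodule.span ℤ
      ({kapV 0, kapV 1, kapV 2, kapV 3, a1V + a2V, rhV, om1V, om2V,
        (2:ℚ)⁻¹ • (kapV 1 + kapV 3), (2:ℚ)⁻¹ • (a1V + a2V + om1V + om2V),
        (2:ℚ)⁻¹ • (kapV 0 + kapV 3 + rhV + om1V + om2V)} : Set (Amb 22)) ∧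
    subIndex (Submodule.span ℤ
      ({kapV 0, kapV 1, kapV 2, kapV 3, a1V + a2V, rhV, om1V, om2V} : Set (Amb 22))) FixTau
      = 8 ∧
    Nonempty (disc gramW ↑FixTau ≃+ ((Fin 4 → ZMod 4) × (Fin 2 → ZMod 2))) := by
  have hne : tauL (tauL (sb 0)) ≠ sb 0 := by
    rw [tauL_eq]
    decide +kernel
  refine ⟨map_tauL_Lam, fun x _ => tauL_pow_four x, ⟨sb 0, sb_mem_Lam 0, hne⟩, ?_, ?_,
    disc_fixTau⟩
  · rw [← range_genV]
    exact fixTau_eq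
  · rw [← range_kap]
    exact index_kappa

end K3Paper
end
end
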